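/- Suppose every agent in N has at least one acceptable project, and let D = {C ∈ ℝ^N : C_i > 0 for all i}. Let 𝒰 : D → ℝ^N be any function such that for every C ∈ D there exists a maximizer δ of the Nash product δ ↦ ∏_{i∈N} (u_i(δ))^{C_i} over Δ(1) with 𝒰(C)_i = u_i(δ) for all i ∈ N (by uniqueness of the maximizing utility vector, 𝒰 is well defined and independent of the choice of maximizer). Then 𝒰 is continuous on D. -/

import Mathlib

/-!
Only the set `K` of attainable utility vectors matters: it is the linear image of the simplex,
hence compact and convex, with nonnegative coordinates, and it contains a strictly positive vector
(from the uniform distribution). The weighted product `P C v = ∏ i, v i ^ C i` is jointly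
continuous where the weights are positive.

*Uniqueness* (`prod_rpow_maximizer_unique`): a maximizer has `P C v > 0`, so all its coordinates
are positive. If `v ≠ w` both maximize, the strict AM-GM inequality applied in each coordinate
gives `P C ((v + w) / 2) ^ 2 > P C v * P C w`, contradicting maximality.

*Continuity*: by compactness of `K` it suffices that the only cluster point of `𝒰` at `C₀` is
`𝒰 C₀`. Passing to the limit in `P C w ≤ P C (𝒰 C)` shows that a cluster point maximizes `P C₀`
over `K`, and uniqueness concludes.
-/

open Finset

/-- A distribution of value `V`: nonnegative and sums to `V`. -/
def IsDistribution {A : Type*} [Fintype A] (δ : A → ℝ) (V : ℝ) : Prop :=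
  (∀ x, 0 ≤ δ x) ∧ ∑ x, δ x = V

/-- Agent's (linear) utility of a distribution. -/
def util {A : Type*} [Fintype A] (u : A → ℝ) (δ : A → ℝ) : ℝ :=
  ∑ x, δ x * u x

/-- The Nash product of a distribution (real exponentiation, `0 ^ 0 = 1`). -/
noncomputable def nashProduct {A N : Type*} [Fintype A] [Fintype N]
    (u : N → A → ℝ) (C : N → ℝ) (δ : A → ℝ) : ℝ :=
  ∏ i, (util (u i) δ) ^ (C i)

/-- A Nash distribution for contribution profile `C`: a maximizer of the Nash
product over `Δ(|C|)`. -/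
def IsNashDistribution {A N : Type*} [Fintype A] [Fintype N]
    (u : N → A → ℝ) (C : N → ℝ) (δ : A → ℝ) : Prop :=
  IsDistribution δ (∑ i, C i) ∧
    ∀ δ' : A → ℝ, IsDistribution δ' (∑ i, C i) →
      nashProduct u C δ' ≤ nashProduct u C δ

open Filter Topology

lemma util_nonneg {A : Type*} [Fintype A] {u δ : A → ℝ} (hu : ∀ x, 0 ≤ u x)
    (hδ : ∀ x, 0 ≤ δ x) : 0 ≤ util u δ :=
  Finset.sum_nonneg fun x _ => mul_nonneg (hδ x) (hu x)

/-- The utility vectors attainable by distributions of value `1`. -/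
def utilityVectors {A N : Type*} [Fintype A] (u : N → A → ℝ) : Set (N → ℝ) :=
  (fun δ i => util (u i) δ) '' {δ : A → ℝ | IsDistribution δ 1}

lemma isCompact_utilityVectors {A N : Type*} [Fintype A] (u : N → A → ℝ) :
    IsCompact (utilityVectors u) := by
  refine IsCompact.image (isCompact_stdSimplex ℝ A) ?_
  unfold util
  fun_prop

lemma midpoint_mem_utilityVectors {A N : Type*} [Fintype A] {u : N → A → ℝ} {v w : N → ℝ}
    (hv : v ∈ utilityVectors u) (hw : w ∈ utilityVectors u) :
    (fun i => (v i + w i) / 2) ∈ utilityVectors u := by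
  obtain ⟨δ, hδ, rfl⟩ := hv
  obtain ⟨ε, hε, rfl⟩ := hw
  refine ⟨fun x => (δ x + ε x) / 2, ⟨fun x => ?_, ?_⟩, ?_⟩
  · have := hδ.1 x
    have := hε.1 x
    positivity
  · rw [← Finset.sum_div, Finset.sum_add_distrib, hδ.2, hε.2]
    norm_num
  · funext i
    simp only [util]
    rw [← Finset.sum_add_distrib, Finset.sum_div]
    exact Finset.sum_congr rfl fun x _ => by ring

/-- The uniform distribution gives every agent positive utility. -/
lemma exists_pos_mem_utilityVectors {A N : Type*} [Fintype A] [Nonempty A] {u : N → A → ℝ}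
    (hu : ∀ i x, 0 ≤ u i x) (hacc : ∀ i, ∃ x, 0 < u i x) :
    ∃ p ∈ utilityVectors u, ∀ i, 0 < p i := by
  refine ⟨_, ⟨fun _ => (Fintype.card A : ℝ)⁻¹, ⟨fun x => by positivity, by simp⟩, rfl⟩, fun i => ?_⟩
  obtain ⟨x, hx⟩ := hacc i
  have hcard : (0 : ℝ) < (Fintype.card A : ℝ)⁻¹ := by
    have := Fintype.card_pos (α := A)
    positivity
  exact Finset.sum_pos' (fun y _ => mul_nonneg hcard.le (hu i y))
    ⟨x, Finset.mem_univ x, mul_pos hcard hx⟩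

lemma pos_of_prod_rpow_pos {N : Type*} [Fintype N] {C v : N → ℝ} (hC : ∀ i, 0 < C i)
    (hv : ∀ i, 0 ≤ v i) (h : 0 < ∏ i, v i ^ C i) (i : N) : 0 < v i := by
  refine lt_of_le_of_ne (hv i) fun h0 => h.ne' ?_
  exact Finset.prod_eq_zero (Finset.mem_univ i) (by rw [← h0, Real.zero_rpow (hC i).ne'])

/-- Strict AM-GM in each coordinate, multiplied over all coordinates. -/
lemma prod_rpow_mul_lt_midpoint_sq {N : Type*} [Fintype N] {C v w : N → ℝ} (hC : ∀ i, 0 < C i)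
    (hv : ∀ i, 0 < v i) (hw : ∀ i, 0 < w i) (hvw : v ≠ w) :
    (∏ i, v i ^ C i) * (∏ i, w i ^ C i) < (∏ i, ((v i + w i) / 2) ^ C i) ^ 2 := by
  have hm : ∀ i, 0 ≤ (v i + w i) / 2 := fun i => by
    have := hv i
    have := hw i
    positivity
  have e1 : (∏ i, v i ^ C i) * (∏ i, w i ^ C i) = ∏ i, (v i * w i) ^ C i := by
    rw [← Finset.prod_mul_distrib]
    exact Finset.prod_congr rfl fun i _ => (Real.mul_rpow (hv i).le (hw i).le).symm
  have e2 : (∏ i, ((v i + w i) / 2) ^ C i) ^ 2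
      = ∏ i, ((v i + w i) / 2 * ((v i + w i) / 2)) ^ C i := by
    rw [sq, ← Finset.prod_mul_distrib]
    exact Finset.prod_congr rfl fun i _ => (Real.mul_rpow (hm i) (hm i)).symm
  rw [e1, e2]
  obtain ⟨j, hj⟩ := Function.ne_iff.1 hvw
  refine Finset.prod_lt_prod (fun i _ => Real.rpow_pos_of_pos (mul_pos (hv i) (hw i)) _)
    (fun i _ => ?_) ⟨j, Finset.mem_univ j, ?_⟩
  · refine Real.rpow_le_rpow (mul_pos (hv i) (hw i)).le ?_ (hC i).le
    nlinarith [sq_nonneg (v i - w i)]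
  · refine Real.rpow_lt_rpow (mul_pos (hv j) (hw j)).le ?_ (hC j)
    nlinarith [sq_pos_of_ne_zero (sub_ne_zero.2 hj)]

lemma prod_rpow_maximizer_unique {N : Type*} [Fintype N] {K : Set (N → ℝ)} {C v w p : N → ℝ}
    (hK : ∀ v ∈ K, ∀ i, 0 ≤ v i)
    (hmid : ∀ v ∈ K, ∀ w ∈ K, (fun i => (v i + w i) / 2) ∈ K)
    (hp : p ∈ K) (hp0 : ∀ i, 0 < p i) (hC : ∀ i, 0 < C i)
    (hv : v ∈ K) (hvmax : ∀ z ∈ K, ∏ i, z i ^ C i ≤ ∏ i, v i ^ C i)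
    (hw : w ∈ K) (hwmax : ∀ z ∈ K, ∏ i, z i ^ C i ≤ ∏ i, w i ^ C i) : v = w := by
  by_contra hvw
  have hP : 0 < ∏ i, p i ^ C i := Finset.prod_pos fun i _ => Real.rpow_pos_of_pos (hp0 i) _
  have h := prod_rpow_mul_lt_midpoint_sq hC
    (pos_of_prod_rpow_pos hC (hK v hv) (hP.trans_le (hvmax p hp)))
    (pos_of_prod_rpow_pos hC (hK w hw) (hP.trans_le (hwmax p hp))) hvw
  have hm0 : 0 ≤ ∏ i, ((v i + w i) / 2) ^ C i :=
    Finset.prod_nonneg fun i _ => Real.rpow_nonneg (hK _ (hmid v hv w hw) i) _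
  rw [sq] at h
  exact h.not_ge (mul_le_mul (hvmax _ (hmid v hv w hw)) (hwmax _ (hmid v hv w hw)) hm0
    (hP.trans_le (hvmax p hp)).le)

/-- Positivity of the limiting weights makes `rpow` continuous even at base `0`. -/
lemma tendsto_prod_rpow {ι N : Type*} [Fintype N] {l : Filter ι} {c f : ι → N → ℝ} {C v : N → ℝ}
    (hC : ∀ i, 0 < C i) (hc : Tendsto c l (𝓝 C)) (hf : Tendsto f l (𝓝 v)) :
    Tendsto (fun t => ∏ i, f t i ^ c t i) l (𝓝 (∏ i, v i ^ C i)) :=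
  tendsto_finsetProd _ fun i _ =>
    ((tendsto_pi_nhds.1 hf i).rpow (tendsto_pi_nhds.1 hc i) (Or.inr (hC i)))

theorem nash_utility_map_continuous {A N : Type*}
    [Fintype A] [Nonempty A] [Fintype N]
    (u : N → A → ℝ) (hu : ∀ i x, 0 ≤ u i x)
    (hacc : ∀ i, ∃ x, 0 < u i x)
    (𝒰 : (N → ℝ) → (N → ℝ))
    (h𝒰 : ∀ C : N → ℝ, (∀ i, 0 < C i) →
        ∃ δ : A → ℝ, IsDistribution δ 1 ∧
          (∀ δ' : A → ℝ, IsDistribution δ' 1 →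
            nashProduct u C δ' ≤ nashProduct u C δ) ∧
          ∀ i, 𝒰 C i = util (u i) δ) :
    ContinuousOn 𝒰 {C : N → ℝ | ∀ i, 0 < C i} := by
  have hmax : ∀ C : N → ℝ, (∀ i, 0 < C i) → 𝒰 C ∈ utilityVectors u ∧
      ∀ z ∈ utilityVectors u, ∏ i, z i ^ C i ≤ ∏ i, 𝒰 C i ^ C i := by
    intro C hC
    obtain ⟨δ, hδ, hδmax, hδu⟩ := h𝒰 C hC
    refine ⟨⟨δ, hδ, (funext hδu).symm⟩, ?_⟩
    rintro _ ⟨ε, hε, rfl⟩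
    simpa only [nashProduct, hδu] using hδmax ε hε
  obtain ⟨p, hp, hp0⟩ := exists_pos_mem_utilityVectors hu hacc
  intro C₀ hC₀
  have hD : ∀ᶠ C in 𝓝[{C : N → ℝ | ∀ i, 0 < C i}] C₀, ∀ i, 0 < C i := self_mem_nhdsWithin
  refine (isCompact_utilityVectors u).tendsto_nhds_of_unique_mapClusterPt
    (hD.mono fun C hC => (hmax C hC).1) fun v hv hcl => ?_
  obtain ⟨U, hU, hUv⟩ := mapClusterPt_iff_ultrafilter.1 hcl
  have hid : Tendsto (fun C : N → ℝ => C) U (𝓝 C₀) := hU.trans nhdsWithin_le_nhds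
  refine prod_rpow_maximizer_unique (K := utilityVectors u) ?_
    (fun v hv w hw => midpoint_mem_utilityVectors hv hw) hp hp0 hC₀ hv (fun z hz => ?_)
    (hmax C₀ hC₀).1 (hmax C₀ hC₀).2
  · rintro _ ⟨δ, hδ, rfl⟩ i
    exact util_nonneg (hu i) hδ.1
  · exact le_of_tendsto_of_tendsto (tendsto_prod_rpow hC₀ hid tendsto_const_nhds)
      (tendsto_prod_rpow hC₀ hid hUv) ((hD.filter_mono hU).mono fun C hC => (hmax C hC).2 z hz)
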